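/- arXiv:2406.17341 — 7 statements merged into one kernel-verified Lean document; each statement's English description precedes it below -/
import Mathlib

section
/- Let P be an edge-deletion invariant predicate on simple graphs on a finite vertex type V, let Gt ≤ Ĝ be simple graphs on V with P(Gt). Then every minimizer G* of the edge edit distance d(Ĝ, ·) over the constraint set C = {G : P(G) and Gt ≤ G} can be recovered by the projector: there exists a list l enumerating the candidate edge set E_cand = (edges of Ĝ) \ (edges of Gt) without repetition such that the projector with edge ordering l outputs G*. (Labeled-graph version of Theorem 1: G* ∈ 𝒢^{t−1} = Projector(P, Ĝ, Gt) for a suitable insertion order.) -/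
open SimpleGraph

/-- Edge edit distance between two labeled simple graphs on the same vertex set:
the cardinality of the symmetric difference of their edge sets. -/
noncomputable def editDist {V : Type*} (G₁ G₂ : SimpleGraph V) : ℕ :=
  (symmDiff G₁.edgeSet G₂.edgeSet).ncard

-- One step of the projector: insert the edge `e` into the current graph `G`
-- iff the resulting graph satisfies `P`.
open Classical in
noncomputable def projStep {V : Type*} (P : SimpleGraph V → Prop)
    (G : SimpleGraph V) (e : Sym2 V) : SimpleGraph V :=
  if P (G ⊔ SimpleGraph.fromEdgeSet {e}) then G ⊔ SimpleGraph.fromEdgeSet {e} else G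

/-- The projector with edge ordering `l`: starting from `Gt`, process the edges
of `l` in order, inserting an edge exactly when the graph obtained by inserting
it satisfies `P`. -/
noncomputable def projector {V : Type*} (P : SimpleGraph V → Prop)
    (Gt : SimpleGraph V) (l : List (Sym2 V)) : SimpleGraph V :=
  l.foldl (projStep P) Gt

theorem editDist_lt_of_ssubset {V : Type*} [Fintype V] (G A B : SimpleGraph V)
    (h : symmDiff G.edgeSet A.edgeSet ⊂ symmDiff G.edgeSet B.edgeSet) :
    editDist G A < editDist G B :=
  Set.ncard_lt_ncard h (Set.toFinite _)

theorem projector_good {V : Type*} (P : SimpleGraph V → Prop)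
    (hP : ∀ G G' : SimpleGraph V, P G → G' ≤ G → P G') (S : SimpleGraph V) (hS : P S)
    (l : List (Sym2 V)) : ∀ G : SimpleGraph V, G ≤ S → (∀ e ∈ l, e ∈ S.edgeSet) →
      l.foldl (projStep P) G = G ⊔ SimpleGraph.fromEdgeSet {e | e ∈ l} := by
  induction l with
  | nil => intro G _ _; simp
  | cons a l ih =>
    intro G hG hl
    have h1 : G ⊔ SimpleGraph.fromEdgeSet {a} ≤ S := by
      refine sup_le hG ?_
      intro x y hxy
      rw [SimpleGraph.fromEdgeSet_adj] at hxy
      have := hl a (by simp)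
      rw [← Set.mem_singleton_iff.1 hxy.1] at this
      exact this
    have h2 : projStep P G a = G ⊔ SimpleGraph.fromEdgeSet {a} := by
      unfold projStep
      rw [if_pos (hP _ _ hS h1)]
    rw [List.foldl_cons, h2, ih _ h1 (fun e he => hl e (by simp [he])), sup_assoc]
    congr 1
    rw [← SimpleGraph.fromEdgeSet_union]
    congr 1
    ext e
    simp

theorem projector_bad {V : Type*} (P : SimpleGraph V → Prop) (S : SimpleGraph V)
    (l : List (Sym2 V)) (h : ∀ e ∈ l, ¬ P (S ⊔ SimpleGraph.fromEdgeSet {e})) :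
      l.foldl (projStep P) S = S := by
  induction l with
  | nil => rfl
  | cons a l ih =>
    have h2 : projStep P S a = S := by
      unfold projStep
      rw [if_neg (h a (by simp))]
    rw [List.foldl_cons, h2, ih (fun e he => h e (by simp [he]))]

/-- Labeled-graph version of Theorem 1: every minimizer `Gstar` of the edit
distance to `Ghat` over the constraint set `C = {G : P G ∧ Gt ≤ G}` is an
output of the projector for some enumeration (without repetition) of the
candidate edge set `Ghat.edgeSet \ Gt.edgeSet`. -/
theorem minimizer_mem_projector_outputs {V : Type*} [Fintype V] [DecidableEq V]
    (P : SimpleGraph V → Prop)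
    (hP : ∀ G G' : SimpleGraph V, P G → G' ≤ G → P G')
    (Gt Ghat : SimpleGraph V) (hle : Gt ≤ Ghat) (hGt : P Gt) :
    ∀ Gstar : SimpleGraph V, P Gstar → Gt ≤ Gstar →
      (∀ H : SimpleGraph V, P H → Gt ≤ H → editDist Ghat Gstar ≤ editDist Ghat H) →
      ∃ l : List (Sym2 V), l.Nodup ∧
        (∀ e : Sym2 V, e ∈ l ↔ e ∈ Ghat.edgeSet \ Gt.edgeSet) ∧
        projector P Gt l = Gstar := by
  classical
  intro S hS hGS hmin
  have hSle : S ≤ Ghat := by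
    by_contra hn
    rw [← SimpleGraph.edgeSet_subset_edgeSet, Set.not_subset] at hn
    obtain ⟨e, he, he'⟩ := hn
    refine absurd (hmin (S ⊓ Ghat) (hP _ _ hS inf_le_left) (le_inf hGS hle)) (not_le.2 ?_)
    apply editDist_lt_of_ssubset
    rw [Set.ssubset_iff_of_subset]
    · exact ⟨e, by simp [Set.mem_symmDiff, he, he'], by simp [Set.mem_symmDiff, he']⟩
    · intro x hx
      simp only [Set.mem_symmDiff, SimpleGraph.edgeSet_inf, Set.mem_inter_iff] at hx ⊢
      tauto
  have hbad : ∀ e ∈ Ghat.edgeSet \ S.edgeSet, ¬ P (S ⊔ SimpleGraph.fromEdgeSet {e}) := by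
    rintro e ⟨he, he'⟩ hPe
    have hd : ¬ e.IsDiag := Ghat.not_isDiag_of_mem_edgeSet he
    have hes : (S ⊔ SimpleGraph.fromEdgeSet {e}).edgeSet = insert e S.edgeSet := by
      ext x
      simp only [SimpleGraph.edgeSet_sup, SimpleGraph.edgeSet_fromEdgeSet, Set.mem_union,
        Set.mem_sdiff, Set.mem_singleton_iff, Set.mem_insert_iff]
      constructor
      · rintro (h | h)
        · exact Or.inr h
        · exact Or.inl h.1
      · rintro (rfl | h)
        · exact Or.inr ⟨rfl, hd⟩
        · exact Or.inl h
    refine absurd (hmin _ hPe (hGS.trans le_sup_left)) (not_le.2 ?_)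
    apply editDist_lt_of_ssubset
    rw [hes, Set.ssubset_iff_of_subset]
    · exact ⟨e, by simp [Set.mem_symmDiff, he, he'], by simp [Set.mem_symmDiff, he]⟩
    · intro x hx
      simp only [Set.mem_symmDiff, Set.mem_insert_iff] at hx ⊢
      rcases hx with hx | ⟨rfl | hx, hx'⟩
      · tauto
      · exact absurd he hx'
      · tauto
  have hf1 := Set.toFinite (S.edgeSet \ Gt.edgeSet)
  have hf2 := Set.toFinite (Ghat.edgeSet \ S.edgeSet)
  have m1 : ∀ e, e ∈ hf1.toFinset.toList ↔ e ∈ S.edgeSet \ Gt.edgeSet := by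
    intro e; rw [Finset.mem_toList, Set.Finite.mem_toFinset]
  have m2 : ∀ e, e ∈ hf2.toFinset.toList ↔ e ∈ Ghat.edgeSet \ S.edgeSet := by
    intro e; rw [Finset.mem_toList, Set.Finite.mem_toFinset]
  refine ⟨hf1.toFinset.toList ++ hf2.toFinset.toList, ?_, ?_, ?_⟩
  · rw [List.nodup_append']
    refine ⟨Finset.nodup_toList _, Finset.nodup_toList _, ?_⟩
    intro e h1 h2
    exact ((m2 e).1 h2).2 ((m1 e).1 h1).1
  · intro e
    rw [List.mem_append, m1, m2]
    have a1 : e ∈ S.edgeSet → e ∈ Ghat.edgeSet :=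
      fun h => SimpleGraph.edgeSet_subset_edgeSet.2 hSle h
    have a2 : e ∈ Gt.edgeSet → e ∈ S.edgeSet :=
      fun h => SimpleGraph.edgeSet_subset_edgeSet.2 hGS h
    simp only [Set.mem_sdiff]
    tauto
  · unfold projector
    rw [List.foldl_append, projector_good P hP S hS _ Gt hGS (fun e he => ((m1 e).1 he).1)]
    have : Gt ⊔ SimpleGraph.fromEdgeSet {e | e ∈ hf1.toFinset.toList} = S := by
      have : {e | e ∈ hf1.toFinset.toList} = S.edgeSet \ Gt.edgeSet := Set.ext m1
      rw [this, ← SimpleGraph.edgeSet_sdiff, SimpleGraph.fromEdgeSet_edgeSet]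
      exact sup_sdiff_cancel_right hGS
    rw [this]
    exact projector_bad P S _ (fun e he => hbad e ((m2 e).1 he))
end

section
/- Let Gt ≤ Ĝ be simple graphs on a finite vertex type V with Gt acyclic, and let E_cand = (edges of Ĝ) \ (edges of Gt). Then any two maximal feasible subsets S₁, S₂ ⊆ E_cand (feasible meaning Gt ∪ S is acyclic) have equal cardinality; equivalently, every maximal feasible subset attains the maximum cardinality among feasible subsets. (Core of Theorem 2: for the acyclicity constraint, every output of the projector is an optimal projection.) -/
open SimpleGraph

theorem reach_of_adj_aux {V : Type*} {F G : SimpleGraph V}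
    (h : ∀ a b, F.Adj a b → G.Reachable a b) {a b : V} (r : F.Reachable a b) :
    G.Reachable a b := by
  obtain ⟨p⟩ := r
  induction p with
  | nil => exact Reachable.refl _
  | cons hadj _ ih => exact (h _ _ hadj).trans ih

theorem ncard_sup_edge_aux {V : Type*} [Finite V] {F : SimpleGraph V} {u v : V}
    (h : ¬ F.Reachable u v) : (F ⊔ edge u v).edgeSet.ncard = F.edgeSet.ncard + 1 := by
  have hne : u ≠ v := by rintro rfl; exact h (Reachable.refl _)
  have : (F ⊔ edge u v).edgeSet = insert s(u, v) F.edgeSet := by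
    rw [edgeSet_sup, edge_edgeSet_of_ne hne, Set.union_comm]; rfl
  rw [this, Set.ncard_insert_of_notMem]
  intro hm
  exact h (Adj.reachable hm)

theorem forest_card_aux {V : Type*} [Finite V] (F : SimpleGraph V) : ∀ G : SimpleGraph V,
    F.IsAcyclic → G.IsAcyclic →
    (∀ a b, F.Adj a b → G.Reachable a b) → (∀ a b, G.Adj a b → F.Reachable a b) →
    F.edgeSet.ncard = G.edgeSet.ncard := by
  classical
  have := Fintype.ofFinite V
  induction F using WellFoundedGT.induction with
  | ind F ih =>
  intro G hF hG h1 h2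
  by_cases hc : F.Preconnected
  · rcases isEmpty_or_nonempty V with hV | hV
    · rw [Subsingleton.elim F G]
    · have tF : F.IsTree := ⟨⟨hc⟩, hF⟩
      have tG : G.IsTree := ⟨⟨fun a b => reach_of_adj_aux h1 (hc a b)⟩, hG⟩
      have e1 := tF.card_edgeFinset
      have e2 := tG.card_edgeFinset
      rw [← coe_edgeFinset F, ← coe_edgeFinset G, Set.ncard_coe_finset, Set.ncard_coe_finset]
      omega
  · simp only [Preconnected, not_forall] at hc
    obtain ⟨u, v, huv⟩ := hc
    have huv' : ¬ G.Reachable u v := fun h => huv (reach_of_adj_aux h2 h)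
    have hne : u ≠ v := by rintro rfl; exact huv (Reachable.refl _)
    have key : ∀ A B : SimpleGraph V, (∀ a b, A.Adj a b → B.Reachable a b) →
        ∀ a b, (A ⊔ edge u v).Adj a b → (B ⊔ edge u v).Reachable a b := by
      intro A B hAB a b hab
      rcases hab with hab | hab
      · exact (hAB a b hab).mono le_sup_left
      · exact (Adj.reachable hab).mono le_sup_right
    have hlt : F < F ⊔ edge u v := by
      refine lt_of_le_of_ne le_sup_left fun he => ?_
      have := ncard_sup_edge_aux huv
      rw [← he] at this
      omega
    have := ih _ hlt (G ⊔ edge u v) (hF.sup_edge_of_not_reachable huv)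
      (hG.sup_edge_of_not_reachable huv') (key _ _ h1) (key _ _ h2)
    rw [ncard_sup_edge_aux huv, ncard_sup_edge_aux huv'] at this
    omega

theorem reach_max_aux {V : Type*} (Gt Ghat : SimpleGraph V) (S : Set (Sym2 V))
    (hac : (Gt ⊔ SimpleGraph.fromEdgeSet S).IsAcyclic)
    (hmax : ∀ e ∈ (Ghat.edgeSet \ Gt.edgeSet) \ S,
        ¬ (Gt ⊔ SimpleGraph.fromEdgeSet (insert e S)).IsAcyclic) (a b : V)
    (hab : Ghat.Adj a b) : (Gt ⊔ SimpleGraph.fromEdgeSet S).Reachable a b := by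
  by_contra h
  refine hmax s(a, b) ⟨⟨hab, fun hg => h ?_⟩, fun hs => h ?_⟩ ?_
  · exact (Adj.reachable hg).mono le_sup_left
  · exact Adj.reachable (Or.inr ((fromEdgeSet_adj S).2 ⟨hs, hab.ne⟩))
  · have := hac.sup_edge_of_not_reachable h
    rwa [sup_assoc, edge, ← fromEdgeSet_union, Set.union_singleton] at this

theorem ncard_max_aux {V : Type*} [Finite V] (Gt Ghat : SimpleGraph V) (S : Set (Sym2 V))
    (hS : S ⊆ Ghat.edgeSet \ Gt.edgeSet) :
    (Gt ⊔ SimpleGraph.fromEdgeSet S).edgeSet.ncard = Gt.edgeSet.ncard + S.ncard := by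
  have : (Gt ⊔ SimpleGraph.fromEdgeSet S).edgeSet = Gt.edgeSet ∪ S := by
    rw [edgeSet_sup, edgeSet_fromEdgeSet, sdiff_eq_left.2]
    exact Set.disjoint_left.2 fun e he hd => Ghat.not_isDiag_of_mem_edgeSet (hS he).1 hd
  rw [this, Set.ncard_union_eq]
  exact Set.disjoint_left.2 fun e he hd => (hS hd).2 he

/-- Core of Theorem 2: for the acyclicity constraint, any two maximal feasible
subsets of the candidate edge set `Ghat.edgeSet \ Gt.edgeSet` (subsets `S` with
`Gt ∪ S` acyclic to which no further candidate edge can be added keeping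
acyclicity) have equal cardinality. -/
theorem acyclic_maximal_feasible_same_card {V : Type*} [Fintype V] [DecidableEq V]
    (Gt Ghat : SimpleGraph V) (hle : Gt ≤ Ghat) (hac : Gt.IsAcyclic) :
    ∀ S₁ S₂ : Set (Sym2 V),
      S₁ ⊆ Ghat.edgeSet \ Gt.edgeSet →
      (Gt ⊔ SimpleGraph.fromEdgeSet S₁).IsAcyclic →
      (∀ e ∈ (Ghat.edgeSet \ Gt.edgeSet) \ S₁,
        ¬ (Gt ⊔ SimpleGraph.fromEdgeSet (insert e S₁)).IsAcyclic) →
      S₂ ⊆ Ghat.edgeSet \ Gt.edgeSet →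
      (Gt ⊔ SimpleGraph.fromEdgeSet S₂).IsAcyclic →
      (∀ e ∈ (Ghat.edgeSet \ Gt.edgeSet) \ S₂,
        ¬ (Gt ⊔ SimpleGraph.fromEdgeSet (insert e S₂)).IsAcyclic) →
      S₁.ncard = S₂.ncard := by
  intro S₁ S₂ hS₁ ha₁ hm₁ hS₂ ha₂ hm₂
  have hle' : ∀ S : Set (Sym2 V), S ⊆ Ghat.edgeSet \ Gt.edgeSet →
      ∀ a b, (Gt ⊔ SimpleGraph.fromEdgeSet S).Adj a b → Ghat.Adj a b := by
    intro S hS a b hab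
    rcases hab with hab | hab
    · exact hle hab
    · exact (hS ((fromEdgeSet_adj S).1 hab).1).1
  have := forest_card_aux _ _ ha₁ ha₂
    (fun a b hab => reach_max_aux Gt Ghat S₂ ha₂ hm₂ a b (hle' S₁ hS₁ a b hab))
    (fun a b hab => reach_max_aux Gt Ghat S₁ ha₁ hm₁ a b (hle' S₂ hS₂ a b hab))
  rw [ncard_max_aux Gt Ghat S₁ hS₁, ncard_max_aux Gt Ghat S₂ hS₂] at this
  omega
end

section
/- Let Gt ≤ Ĝ be simple graphs on a finite vertex type V with Gt acyclic, and let C = {G : G is acyclic and Gt ≤ G}. Then a graph G* ∈ C minimizes the edge edit distance d(Ĝ, ·) over C if and only if Gt ≤ G* ≤ Ĝ and for every edge e of Ĝ that is not an edge of G*, the two endpoints of e lie in the same connected component of G* (equivalently, inserting e into G* creates a cycle). (Theorem 2: for the acyclicity constraint, the set of graphs output by the projector equals the set of optimal projections.) -/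
open SimpleGraph

theorem aux_card {V : Type*} [Finite V] (T : SimpleGraph V) :
    ∀ (n : ℕ) (F : SimpleGraph V), (F.edgeSet \ T.edgeSet).ncard = n → F.IsAcyclic →
      (∀ x y, F.Adj x y → T.Reachable x y) → F.edgeSet.ncard ≤ T.edgeSet.ncard := by
  intro n
  induction n with
  | zero =>
    intro F h0 _ _
    rw [Set.ncard_eq_zero (Set.toFinite _), Set.diff_eq_empty] at h0
    exact Set.ncard_le_ncard h0 (Set.toFinite _)
  | succ n ih =>
    intro F hn hF hR
    have hne : (F.edgeSet \ T.edgeSet).Nonempty := by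
      rw [← Set.ncard_pos (Set.toFinite _)]; omega
    obtain ⟨e, he⟩ := hne
    induction e using Sym2.ind with
    | _ u v =>
    have heF : F.Adj u v := he.1
    have heT : ¬ T.Adj u v := he.2
    have hbr : ¬ (F.deleteEdges {s(u, v)}).Reachable u v := by
      have := isAcyclic_iff_forall_adj_isBridge.1 hF heF
      simpa [isBridge_iff] using this
    obtain ⟨x, y, hxyT, hxy⟩ : ∃ x y, T.Adj x y ∧
        ¬ (F.deleteEdges {s(u, v)}).Reachable x y := by
      by_contra! hcon
      apply hbr
      obtain ⟨w⟩ := hR u v heF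
      clear hbr heF heT he hn
      generalize F.deleteEdges {s(u, v)} = F' at hcon
      induction w with
      | nil => exact Reachable.refl _
      | cons h _ ih2 => exact (hcon _ _ h).trans ih2
    set F' := F.deleteEdges {s(u, v)} with hF'
    have hne : s(x, y) ≠ s(u, v) := by
      intro h
      apply heT
      rw [← mem_edgeSet, ← h]; exact hxyT
    have hxyF : s(x, y) ∉ F.edgeSet := by
      intro h
      apply hxy
      apply Adj.reachable
      rw [hF', deleteEdges_adj]
      exact ⟨h, by simpa using hne⟩
    have hac : (F' ⊔ edge x y).IsAcyclic :=
      (hF.anti (deleteEdges_le _)).sup_edge_of_not_reachable hxy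
    have hE : (F' ⊔ edge x y).edgeSet = insert s(x, y) (F.edgeSet \ {s(u, v)}) := by
      rw [edgeSet_sup, edge_edgeSet_of_ne hxyT.ne, hF', edgeSet_deleteEdges, Set.union_singleton]
    have hcard : (F' ⊔ edge x y).edgeSet.ncard = F.edgeSet.ncard := by
      rw [hE, Set.ncard_insert_of_notMem (fun h => hxyF h.1) (Set.toFinite _),
        Set.ncard_diff_singleton_add_one (show s(u, v) ∈ F.edgeSet from heF) (Set.toFinite _)]
    rw [← hcard]
    apply ih _ _ hac
    · intro a b hab
      have hab' : s(a, b) ∈ (F' ⊔ edge x y).edgeSet := hab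
      rw [hE] at hab'
      rcases hab' with h | h
      · exact Adj.reachable (by rw [← mem_edgeSet, h]; exact hxyT)
      · exact hR a b h.1
    · have : (F' ⊔ edge x y).edgeSet \ T.edgeSet = (F.edgeSet \ T.edgeSet) \ {s(u, v)} := by
        rw [hE, Set.insert_diff_of_mem _ (show s(x, y) ∈ T.edgeSet from hxyT), Set.diff_diff_comm]
      rw [this, Set.ncard_diff_singleton_of_mem he]; omega

/-- Theorem 2 (acyclicity constraint): a graph `Gstar` in the constraint set
`C = {G : G acyclic ∧ Gt ≤ G}` minimizes the edit distance to `Ghat` over `C`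
iff `Gt ≤ Gstar ≤ Ghat` and every edge of `Ghat` missing from `Gstar` joins two
vertices in the same connected component of `Gstar`. -/
theorem acyclic_minimizer_iff {V : Type*} [Fintype V] [DecidableEq V]
    (Gt Ghat : SimpleGraph V) (hle : Gt ≤ Ghat) (hac : Gt.IsAcyclic)
    (Gstar : SimpleGraph V) (hGstar : Gstar.IsAcyclic) (hGtGstar : Gt ≤ Gstar) :
    (∀ H : SimpleGraph V, H.IsAcyclic → Gt ≤ H →
        editDist Ghat Gstar ≤ editDist Ghat H) ↔
      (Gt ≤ Gstar ∧ Gstar ≤ Ghat ∧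
        ∀ u v : V, s(u, v) ∈ Ghat.edgeSet → s(u, v) ∉ Gstar.edgeSet →
          Gstar.Reachable u v) := by
  constructor
  · intro hmin
    refine ⟨hGtGstar, ?_, ?_⟩
    · intro u v huv
      by_contra hn
      have h := hmin (Gstar.deleteEdges {s(u, v)}) (hGstar.anti (deleteEdges_le _)) (by
        intro a b hab
        rw [deleteEdges_adj]
        refine ⟨hGtGstar hab, ?_⟩
        intro h
        apply hn
        rw [← mem_edgeSet, ← Set.mem_singleton_iff.1 h]
        exact hle hab)
      refine absurd h (not_le.2 ?_)
      unfold editDist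
      apply Set.ncard_lt_ncard _ (Set.toFinite _)
      have h1 : s(u, v) ∈ Gstar.edgeSet := huv
      have h2 : s(u, v) ∉ Ghat.edgeSet := hn
      rw [edgeSet_deleteEdges, Set.ssubset_iff_of_subset]
      · refine ⟨s(u, v), ?_, ?_⟩ <;> simp only [Set.mem_symmDiff, Set.mem_diff, Set.mem_singleton_iff] <;> tauto
      · intro e
        by_cases hs : e = s(u, v)
        · subst hs; simp only [Set.mem_symmDiff, Set.mem_diff, Set.mem_singleton_iff]; tauto
        · simp only [Set.mem_symmDiff, Set.mem_diff, Set.mem_singleton_iff]; tauto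
    · intro u v h1 h2
      by_contra hn
      have hne : u ≠ v := by rintro rfl; exact hn (Reachable.refl _)
      have h := hmin (Gstar ⊔ edge u v) (hGstar.sup_edge_of_not_reachable hn)
        (hGtGstar.trans le_sup_left)
      refine absurd h (not_le.2 ?_)
      unfold editDist
      apply Set.ncard_lt_ncard _ (Set.toFinite _)
      rw [edgeSet_sup, edge_edgeSet_of_ne hne, Set.ssubset_iff_of_subset]
      · refine ⟨s(u, v), ?_, ?_⟩ <;> simp only [Set.mem_symmDiff, Set.mem_union, Set.mem_singleton_iff] <;> tauto
      · intro e
        by_cases hs : e = s(u, v)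
        · subst hs; simp only [Set.mem_symmDiff, Set.mem_union, Set.mem_singleton_iff]; tauto
        · simp only [Set.mem_symmDiff, Set.mem_union, Set.mem_singleton_iff]; tauto
  · rintro ⟨-, hsub, hreach⟩ H hH -
    have key := aux_card Gstar _ (H ⊓ Ghat) rfl (hH.anti inf_le_left) (by
      intro x y hxy
      by_cases hs : Gstar.Adj x y
      · exact hs.reachable
      · exact hreach x y hxy.2 hs)
    have hs' : Gstar.edgeSet ⊆ Ghat.edgeSet := edgeSet_mono hsub
    rw [edgeSet_inf] at key
    unfold editDist
    have e1 : symmDiff Ghat.edgeSet Gstar.edgeSet = Ghat.edgeSet \ Gstar.edgeSet := by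
      rw [Set.symmDiff_def, Set.diff_eq_empty.2 hs', Set.union_empty]
    have e2 := Set.ncard_diff_add_ncard_of_subset hs' (Set.toFinite _)
    have e3 := Set.ncard_diff_add_ncard_of_subset
      (Set.inter_subset_right : H.edgeSet ∩ Ghat.edgeSet ⊆ Ghat.edgeSet) (Set.toFinite _)
    have e4 : (Ghat.edgeSet \ (H.edgeSet ∩ Ghat.edgeSet)).ncard ≤
        (symmDiff Ghat.edgeSet H.edgeSet).ncard := by
      apply Set.ncard_le_ncard _ (Set.toFinite _)
      intro e
      simp only [Set.mem_symmDiff, Set.mem_diff, Set.mem_inter_iff]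
      tauto
    rw [e1]
    omega
end

section
/- Let P be an edge-deletion invariant predicate on simple graphs on a finite vertex type V, let Gt ≤ Ĝ be simple graphs on V with P(Gt), and let E_cand = (edges of Ĝ) \ (edges of Gt). Then for every subset S ⊆ E_cand: there exists a list l enumerating E_cand without repetition such that the projector with edge ordering l outputs Gt ∪ S, if and only if S is maximal feasible (S is feasible and no candidate edge outside S can be added to S keeping feasibility). In particular every projector output satisfies P, contains Gt, and is a subgraph of Ĝ. -/
open SimpleGraph

theorem aux_le {V : Type*} (P : SimpleGraph V → Prop) (l : List (Sym2 V)) :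
    ∀ G : SimpleGraph V, G ≤ projector P G l := by
  induction l with
  | nil => intro G; exact le_refl _
  | cons a l ih =>
    intro G
    refine le_trans ?_ (ih (projStep P G a))
    unfold projStep
    split_ifs
    · exact le_sup_left
    · exact le_refl _

theorem aux_P {V : Type*} (P : SimpleGraph V → Prop) (l : List (Sym2 V)) :
    ∀ G : SimpleGraph V, P G → P (projector P G l) := by
  induction l with
  | nil => intro G h; exact h
  | cons a l ih =>
    intro G h
    refine ih (projStep P G a) ?_
    unfold projStep
    split_ifs with h1
    · exact h1
    · exact h

theorem aux_ub {V : Type*} (P : SimpleGraph V → Prop) (H : SimpleGraph V) (l : List (Sym2 V)) :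
    ∀ G : SimpleGraph V, G ≤ H → (∀ e ∈ l, SimpleGraph.fromEdgeSet {e} ≤ H) →
      projector P G l ≤ H := by
  induction l with
  | nil => intro G h _; exact h
  | cons a l ih =>
    intro G h hl
    refine ih (projStep P G a) ?_ (fun e he => hl e (List.mem_cons_of_mem _ he))
    unfold projStep
    split_ifs with h1
    · exact sup_le h (hl a List.mem_cons_self)
    · exact h

theorem aux_max {V : Type*} (P : SimpleGraph V → Prop)
    (hP : ∀ G G' : SimpleGraph V, P G → G' ≤ G → P G') (e : Sym2 V) (l : List (Sym2 V)) :
    ∀ G : SimpleGraph V, e ∈ l → P (projector P G l ⊔ SimpleGraph.fromEdgeSet {e}) →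
      SimpleGraph.fromEdgeSet {e} ≤ projector P G l := by
  induction l with
  | nil => intro G h _; simp at h
  | cons a l ih =>
    intro G h hp
    rcases List.mem_cons.1 h with rfl | h
    · have h1 : P (G ⊔ SimpleGraph.fromEdgeSet {e}) :=
        hP _ _ hp (sup_le_sup_right (aux_le P (e :: l) G) _)
      refine le_trans ?_ (aux_le P l (projStep P G e))
      unfold projStep
      rw [if_pos h1]
      exact le_sup_right
    · exact ih (projStep P G a) h hp

theorem aux_rej {V : Type*} (P : SimpleGraph V → Prop) (G : SimpleGraph V) (l : List (Sym2 V)) :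
    (∀ e ∈ l, ¬ P (G ⊔ SimpleGraph.fromEdgeSet {e})) → projector P G l = G := by
  induction l with
  | nil => intro _; rfl
  | cons a l ih =>
    intro h
    have h1 : projStep P G a = G := by
      unfold projStep
      rw [if_neg (h a List.mem_cons_self)]
    change projector P (projStep P G a) l = G
    rw [h1]
    exact ih (fun e he => h e (List.mem_cons_of_mem _ he))

theorem aux_acc {V : Type*} (P : SimpleGraph V → Prop)
    (hP : ∀ G G' : SimpleGraph V, P G → G' ≤ G → P G') (H : SimpleGraph V) (hH : P H)
    (l : List (Sym2 V)) : ∀ G : SimpleGraph V, G ≤ H →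
    (∀ e ∈ l, SimpleGraph.fromEdgeSet {e} ≤ H) →
    ∀ e ∈ l, SimpleGraph.fromEdgeSet {e} ≤ projector P G l := by
  intro G hG hl e he
  exact aux_max P hP e l G he (hP _ _ hH (sup_le (aux_ub P H l G hG hl) (hl e he)))

/-- Characterization of projector outputs: for `S ⊆ E_cand`, the graph `Gt ∪ S`
is the output of the projector for some enumeration of `E_cand` without
repetition iff `S` is maximal feasible. In particular, every projector output
satisfies `P`, contains `Gt`, and is a subgraph of `Ghat`. -/
theorem projector_output_iff_maximal_feasible {V : Type*} [Fintype V] [DecidableEq V]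
    (P : SimpleGraph V → Prop)
    (hP : ∀ G G' : SimpleGraph V, P G → G' ≤ G → P G')
    (Gt Ghat : SimpleGraph V) (hle : Gt ≤ Ghat) (hGt : P Gt) :
    (∀ S : Set (Sym2 V), S ⊆ Ghat.edgeSet \ Gt.edgeSet →
      ((∃ l : List (Sym2 V), l.Nodup ∧
          (∀ e : Sym2 V, e ∈ l ↔ e ∈ Ghat.edgeSet \ Gt.edgeSet) ∧
          projector P Gt l = Gt ⊔ SimpleGraph.fromEdgeSet S) ↔
        (P (Gt ⊔ SimpleGraph.fromEdgeSet S) ∧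
          ∀ e ∈ (Ghat.edgeSet \ Gt.edgeSet) \ S,
            ¬ P (Gt ⊔ SimpleGraph.fromEdgeSet (insert e S))))) ∧
    (∀ l : List (Sym2 V), l.Nodup →
      (∀ e : Sym2 V, e ∈ l ↔ e ∈ Ghat.edgeSet \ Gt.edgeSet) →
      P (projector P Gt l) ∧ Gt ≤ projector P Gt l ∧ projector P Gt l ≤ Ghat) := by
  classical
  have hsub : ∀ e ∈ Ghat.edgeSet, SimpleGraph.fromEdgeSet {e} ≤ Ghat := by
    intro e he
    rw [← SimpleGraph.fromEdgeSet_edgeSet Ghat]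
    exact SimpleGraph.fromEdgeSet_mono (Set.singleton_subset_iff.2 he)
  have hins : ∀ (e : Sym2 V) (S : Set (Sym2 V)),
      Gt ⊔ SimpleGraph.fromEdgeSet (insert e S) =
        (Gt ⊔ SimpleGraph.fromEdgeSet S) ⊔ SimpleGraph.fromEdgeSet {e} := by
    intro e S
    rw [sup_assoc, ← Set.union_singleton, SimpleGraph.fromEdgeSet_union]
  refine ⟨fun S hS => ⟨?_, ?_⟩, fun l _ hl => ⟨aux_P P l Gt hGt, aux_le P l Gt,
    aux_ub P Ghat l Gt hle fun e he => hsub e ((hl e).1 he).1⟩⟩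
  · rintro ⟨l, -, hl, hout⟩
    refine ⟨hout ▸ aux_P P l Gt hGt, fun e he hp => ?_⟩
    rw [hins, ← hout] at hp
    have h1 := aux_max P hP e l Gt ((hl e).2 he.1) hp
    rw [hout] at h1
    have hd := Ghat.not_isDiag_of_mem_edgeSet he.1.1
    have h2 : e ∈ (Gt ⊔ SimpleGraph.fromEdgeSet S).edgeSet := by
      apply SimpleGraph.edgeSet_mono h1
      rw [SimpleGraph.edgeSet_fromEdgeSet]
      exact ⟨rfl, hd⟩
    rw [SimpleGraph.edgeSet_sup, SimpleGraph.edgeSet_fromEdgeSet] at h2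
    rcases h2 with h2 | h2
    · exact he.1.2 h2
    · exact he.2 h2.1
  · rintro ⟨hp, hmax⟩
    set A : List (Sym2 V) := (Set.toFinset S).toList with hA
    set B : List (Sym2 V) := (Set.toFinset ((Ghat.edgeSet \ Gt.edgeSet) \ S)).toList with hB
    have mA : ∀ e, e ∈ A ↔ e ∈ S := fun e => by
      rw [hA, Finset.mem_toList, Set.mem_toFinset]
    have mB : ∀ e, e ∈ B ↔ e ∈ (Ghat.edgeSet \ Gt.edgeSet) \ S := fun e => by
      rw [hB, Finset.mem_toList, Set.mem_toFinset]
    refine ⟨A ++ B, ?_, ?_, ?_⟩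
    · refine List.Nodup.append (Finset.nodup_toList _) (Finset.nodup_toList _) ?_
      intro e h1 h2
      exact ((mB e).1 h2).2 ((mA e).1 h1)
    · intro e
      rw [List.mem_append, mA, mB]
      constructor
      · rintro (h | h)
        · exact hS h
        · exact h.1
      · intro h
        by_cases h1 : e ∈ S
        · exact Or.inl h1
        · exact Or.inr ⟨h, h1⟩
    · have hAS : ∀ e ∈ A, SimpleGraph.fromEdgeSet {e} ≤ Gt ⊔ SimpleGraph.fromEdgeSet S :=
        fun e he => le_trans (SimpleGraph.fromEdgeSet_mono
          (Set.singleton_subset_iff.2 ((mA e).1 he))) le_sup_right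
      have h1 : projector P Gt A = Gt ⊔ SimpleGraph.fromEdgeSet S := by
        apply le_antisymm
        · exact aux_ub P _ A Gt le_sup_left hAS
        · refine sup_le (aux_le P A Gt) ?_
          intro v w hvw
          rw [SimpleGraph.fromEdgeSet_adj] at hvw
          refine aux_acc P hP _ hp A Gt le_sup_left hAS s(v, w) ((mA _).2 hvw.1) ?_
          rw [SimpleGraph.fromEdgeSet_adj]
          exact ⟨rfl, hvw.2⟩
      have h2 : projector P Gt (A ++ B) = projector P (projector P Gt A) B := by
        unfold projector
        exact List.foldl_append
      rw [h2, h1]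
      apply aux_rej
      intro e he
      rw [← hins]
      exact hmax e ((mB e).1 he)
end

section
/- Let P be an edge-deletion invariant predicate on simple graphs on a finite vertex type V, and let Gt ≤ Ĝ be simple graphs on V with P(Gt). Then for every graph G on V with P(G) and Gt ≤ G, the meet G ⊓ Ĝ (the graph whose edges are the common edges of G and Ĝ) satisfies P(G ⊓ Ĝ), Gt ≤ G ⊓ Ĝ ≤ Ĝ, and d(Ĝ, G ⊓ Ĝ) ≤ d(Ĝ, G); moreover the inequality is strict whenever G is not a subgraph of Ĝ. (Intersection lemma underlying Theorem 1: intersecting any constraint-satisfying supergraph of Gt with Ĝ stays in the constraint set and does not increase the distance to Ĝ.) -/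
open SimpleGraph

/-- Intersection lemma underlying Theorem 1: for an edge-deletion invariant `P`
with `P Gt` and `Gt ≤ Ghat`, intersecting any constraint-satisfying supergraph
`G` of `Gt` with `Ghat` stays in the constraint set, is a subgraph of `Ghat`,
and does not increase the edit distance to `Ghat`; the distance strictly
decreases whenever `G` is not a subgraph of `Ghat`. -/
theorem meet_stays_in_constraint_set {V : Type*} [Fintype V] [DecidableEq V]
    (P : SimpleGraph V → Prop)
    (hP : ∀ G G' : SimpleGraph V, P G → G' ≤ G → P G')
    (Gt Ghat : SimpleGraph V) (hle : Gt ≤ Ghat) (hGt : P Gt) :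
    ∀ G : SimpleGraph V, P G → Gt ≤ G →
      P (G ⊓ Ghat) ∧ Gt ≤ G ⊓ Ghat ∧ G ⊓ Ghat ≤ Ghat ∧
      editDist Ghat (G ⊓ Ghat) ≤ editDist Ghat G ∧
      (¬ G ≤ Ghat → editDist Ghat (G ⊓ Ghat) < editDist Ghat G) := by
  intro G hG hGtG
  have hsub : symmDiff Ghat.edgeSet (G ⊓ Ghat).edgeSet ⊆ symmDiff Ghat.edgeSet G.edgeSet := by
    intro e he
    simp only [SimpleGraph.edgeSet_inf, Set.mem_symmDiff, Set.mem_inter_iff] at he ⊢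
    tauto
  refine ⟨hP G _ hG inf_le_left, le_inf hGtG hle, inf_le_right,
    Set.ncard_le_ncard hsub (Set.toFinite _), fun hn => ?_⟩
  refine Set.ncard_lt_ncard ⟨hsub, fun hsup => hn ?_⟩ (Set.toFinite _)
  rw [← SimpleGraph.edgeSet_subset_edgeSet]
  intro e he
  by_contra hne
  have h := hsup (show e ∈ symmDiff Ghat.edgeSet G.edgeSet from Or.inr ⟨he, hne⟩)
  simp only [SimpleGraph.edgeSet_inf, Set.mem_symmDiff, Set.mem_inter_iff] at h
  tauto
end

section
/- Let P be an edge-deletion invariant predicate on simple graphs on a finite vertex type V, and let Gt be a simple graph on V with P(Gt). Then the minimum edge edit distance to the constraint set C = {G : P(G) and Gt ≤ G} is monotone under edge insertion: for all simple graphs Ĝ, Ĥ on V with Gt ≤ Ĝ ≤ Ĥ, the minimum over G ∈ C of d(Ĥ, G) is at least the minimum over G ∈ C of d(Ĝ, G). (Key inequality in the proof of Theorem 1: inserting further edges can only take the current graph farther from the constraint set.) -/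
open SimpleGraph

/-- Key inequality in the proof of Theorem 1: for an edge-deletion invariant
`P` with `P Gt`, the minimum edit distance from a graph to the constraint set
`C = {G : P G ∧ Gt ≤ G}` is monotone under edge insertion: if
`Gt ≤ Ghat ≤ Hhat`, then the minimum distance from `Ghat` to `C` is at most
the minimum distance from `Hhat` to `C`. -/
theorem min_dist_to_constraint_monotone {V : Type*} [Fintype V] [DecidableEq V]
    (P : SimpleGraph V → Prop)
    (hP : ∀ G G' : SimpleGraph V, P G → G' ≤ G → P G')
    (Gt : SimpleGraph V) (hGt : P Gt) :
    ∀ Ghat Hhat : SimpleGraph V, Gt ≤ Ghat → Ghat ≤ Hhat →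
      sInf {n : ℕ | ∃ G : SimpleGraph V, P G ∧ Gt ≤ G ∧ editDist Ghat G = n} ≤
        sInf {n : ℕ | ∃ G : SimpleGraph V, P G ∧ Gt ≤ G ∧ editDist Hhat G = n} := by
  intro Ghat Hhat h1 h2
  have hne : {n : ℕ | ∃ G : SimpleGraph V, P G ∧ Gt ≤ G ∧ editDist Hhat G = n}.Nonempty :=
    ⟨_, Gt, hGt, le_rfl, rfl⟩
  obtain ⟨G, hG, hle, hd⟩ := Nat.sInf_mem hne
  rw [← hd]
  refine le_trans (b := editDist Ghat (G ⊓ Ghat))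
    (Nat.sInf_le ⟨G ⊓ Ghat, hP G _ hG inf_le_left, le_inf hle h1, rfl⟩) ?_
  unfold editDist
  refine Set.ncard_le_ncard ?_ (Set.toFinite _)
  intro e he
  have h3 : e ∈ Ghat.edgeSet → e ∈ Hhat.edgeSet := fun h => SimpleGraph.edgeSet_mono h2 h
  rw [SimpleGraph.edgeSet_inf] at he
  simp only [Set.mem_symmDiff, Set.mem_inter_iff] at he ⊢
  tauto
end

section
/- There exist a finite vertex type V, simple graphs Gt ≤ Ĝ on V with Gt of maximum degree at most 2, and two subsets S₁, S₂ of the candidate edge set E_cand = (edges of Ĝ) \ (edges of Gt), each maximal feasible for the property "every vertex has degree at most 2" (i.e., Gt ∪ Sᵢ has maximum degree at most 2 and no further candidate edge can be added keeping maximum degree at most 2), such that |S₁| ≠ |S₂|. (Counterexample from the paper's Figure 6 showing that Theorem 2's equal-cardinality conclusion fails for the maximum-degree constraint: e.g., Gt the star with edges ab, ac on vertices {a, b, c, d} and candidate edges {bc, bd, cd}, where {bc} and {bd, cd} are both maximal feasible.) -/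
open SimpleGraph

/-- Number of neighbours computed from two finite edge lists. -/
theorem aux_ncard (E T : Finset (Sym2 (Fin 4))) (w : Fin 4) :
    ((SimpleGraph.fromEdgeSet (E : Set (Sym2 (Fin 4))) ⊔
      SimpleGraph.fromEdgeSet (T : Set (Sym2 (Fin 4)))).neighborSet w).ncard =
    (Finset.univ.filter (fun v => w ≠ v ∧ (s(w, v) ∈ E ∨ s(w, v) ∈ T))).card := by
  rw [← Set.ncard_coe_finset]
  congr 1
  ext v
  simp only [SimpleGraph.mem_neighborSet, SimpleGraph.sup_adj, SimpleGraph.fromEdgeSet_adj,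
    Finset.mem_coe, Finset.coe_filter, Finset.mem_univ, true_and, Set.mem_ofPred_eq]
  tauto

/-- Edges of the star. -/
def auxE : Finset (Sym2 (Fin 4)) := {s(0, 1), s(0, 2)}

/-- Candidate edges. -/
def auxC : Finset (Sym2 (Fin 4)) := {s(1, 2), s(1, 3), s(2, 3)}

theorem aux_cand : (SimpleGraph.fromEdgeSet ((auxE ∪ auxC : Finset _) : Set (Sym2 (Fin 4)))).edgeSet \
    (SimpleGraph.fromEdgeSet (auxE : Set (Sym2 (Fin 4)))).edgeSet = (auxC : Set (Sym2 (Fin 4))) := by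
  ext e
  simp only [SimpleGraph.edgeSet_fromEdgeSet, Set.mem_sdiff, Finset.mem_coe, Sym2.mem_diagSet]
  revert e
  decide

/-- Counterexample (paper's Figure 6): for the edge-deletion invariant property
"every vertex has degree at most 2", there exist graphs `Gt ≤ Ghat` with `Gt`
of maximum degree at most 2 and two maximal feasible subsets of the candidate
edge set of different cardinalities, so the equal-cardinality conclusion of
Theorem 2 fails for the maximum-degree constraint. -/
theorem maxDegree_maximal_feasible_card_ne :
    ∃ (V : Type) (_ : Fintype V) (_ : DecidableEq V)
      (Gt Ghat : SimpleGraph V) (S₁ S₂ : Set (Sym2 V)),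
      Gt ≤ Ghat ∧
      (∀ w : V, (Gt.neighborSet w).ncard ≤ 2) ∧
      S₁ ⊆ Ghat.edgeSet \ Gt.edgeSet ∧
      (∀ w : V, ((Gt ⊔ SimpleGraph.fromEdgeSet S₁).neighborSet w).ncard ≤ 2) ∧
      (∀ e ∈ (Ghat.edgeSet \ Gt.edgeSet) \ S₁,
        ¬ ∀ w : V,
          ((Gt ⊔ SimpleGraph.fromEdgeSet (insert e S₁)).neighborSet w).ncard ≤ 2) ∧
      S₂ ⊆ Ghat.edgeSet \ Gt.edgeSet ∧
      (∀ w : V, ((Gt ⊔ SimpleGraph.fromEdgeSet S₂).neighborSet w).ncard ≤ 2) ∧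
      (∀ e ∈ (Ghat.edgeSet \ Gt.edgeSet) \ S₂,
        ¬ ∀ w : V,
          ((Gt ⊔ SimpleGraph.fromEdgeSet (insert e S₂)).neighborSet w).ncard ≤ 2) ∧
      S₁.ncard ≠ S₂.ncard := by
  refine ⟨Fin 4, inferInstance, inferInstance, SimpleGraph.fromEdgeSet (auxE : Set _),
    SimpleGraph.fromEdgeSet ((auxE ∪ auxC : Finset _) : Set _),
    (({s(1, 2)} : Finset (Sym2 (Fin 4))) : Set _),
    (({s(1, 3), s(2, 3)} : Finset (Sym2 (Fin 4))) : Set _), ?_, ?_, ?_, ?_, ?_, ?_, ?_, ?_, ?_⟩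
  · exact SimpleGraph.fromEdgeSet_mono (Finset.coe_subset.2 Finset.subset_union_left)
  · intro w
    have h := aux_ncard auxE auxE w
    rw [sup_idem] at h
    rw [h]
    clear h
    revert w
    decide
  · rw [aux_cand, Finset.coe_subset]
    decide
  · simp only [aux_ncard]
    decide
  · rw [aux_cand]
    simp only [← Finset.coe_insert, aux_ncard, ← Finset.coe_sdiff, Finset.mem_coe]
    decide
  · rw [aux_cand, Finset.coe_subset]
    decide
  · simp only [aux_ncard]
    decide
  · rw [aux_cand]
    simp only [← Finset.coe_insert, aux_ncard, ← Finset.coe_sdiff, Finset.mem_coe]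
    decide
  · rw [Set.ncard_coe_finset, Set.ncard_coe_finset]
    decide
end
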